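/- arXiv:2103.14809 — 2 statements merged into one kernel-verified Lean document; each statement's English description precedes it below -/
import Mathlib

section
/- Let R be a φ-ring. Then R is nonnil-coherent if and only if for every pair of injective cogenerators E_1, E_2 and every φ-flat R-module M, the R-module Hom_R(Hom_R(M,E_1),E_2) is φ-flat. -/
open CategoryTheory

universe u

/-- A commutative ring is a `φ`-ring if its nilradical is a divided prime ideal. -/
def IsPhiRing (R : Type u) [CommRing R] : Prop :=
  (nilradical R).IsPrime ∧ ∀ x : R, x ∉ nilradical R → nilradical R ≤ Ideal.span {x}

/-- A ring is nonnil-coherent if every finitely generated nonnil ideal is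
finitely presented as a module. -/
def IsNonnilCoherent (R : Type u) [CommRing R] : Prop :=
  ∀ I : Ideal R, I.FG → ¬ I ≤ nilradical R → Module.FinitePresentation R I

/-- A module is φ-torsion if every element is annihilated by a nonnil ideal. -/
def IsPhiTorsion (R : Type u) [CommRing R] (T : Type u) [AddCommGroup T] [Module R T] : Prop :=
  ∀ t : T, ∃ I : Ideal R, ¬ I ≤ nilradical R ∧ ∀ a ∈ I, a • t = 0

/-- A module `M` is φ-flat if `Tor₁ᴿ(T, M) = 0` for every φ-torsion module `T`. -/
def IsPhiFlat (R : Type u) [CommRing R] (M : Type u) [AddCommGroup M] [Module R M] : Prop :=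
  ∀ (T : Type u) [AddCommGroup T] [Module R T], IsPhiTorsion R T →
    Subsingleton (((Tor (ModuleCat.{u} R) 1).obj (ModuleCat.of R T)).obj (ModuleCat.of R M))

/-- A module `M` is nonnil-injective if `Ext¹ᴿ(T, M) = 0` for every φ-torsion module `T`. -/
def IsNonnilInjective (R : Type u) [CommRing R] (M : Type u) [AddCommGroup M] [Module R M] :
    Prop :=
  ∀ (T : Type u) [AddCommGroup T] [Module R T], IsPhiTorsion R T →
    Subsingleton (((Ext R (ModuleCat.{u} R) 1).obj (Opposite.op (ModuleCat.of R T))).obj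
      (ModuleCat.of R M))

/-- A module `M` is nonnil-FP-injective if `Ext¹ᴿ(T, M) = 0` for every finitely
presented φ-torsion module `T`. -/
def IsNonnilFPInjective (R : Type u) [CommRing R] (M : Type u) [AddCommGroup M] [Module R M] :
    Prop :=
  ∀ (T : Type u) [AddCommGroup T] [Module R T], Module.FinitePresentation R T →
    IsPhiTorsion R T →
    Subsingleton (((Ext R (ModuleCat.{u} R) 1).obj (Opposite.op (ModuleCat.of R T))).obj
      (ModuleCat.of R M))

/-- An injective cogenerator of the category of `R`-modules. -/
def IsInjectiveCogenerator (R : Type u) [CommRing R] (E : Type u) [AddCommGroup E]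
    [Module R E] : Prop :=
  Module.Injective R E ∧
    ∀ (M : Type u) [AddCommGroup M] [Module R M], (∀ f : M →ₗ[R] E, f = 0) → Subsingleton M

open TensorProduct

lemma tor_bridge (R : Type u) [CommRing R] (M : Type u) [AddCommGroup M] [Module R M] :
    ∃ (P : Type u) (_ : AddCommGroup P) (_ : Module R P) (π : P →ₗ[R] M),
      Module.Flat R P ∧ Function.Surjective π ∧
      ∀ (T : Type u) [AddCommGroup T] [Module R T],
        Subsingleton (((Tor (ModuleCat.{u} R) 1).obj (ModuleCat.of R T)).obj (ModuleCat.of R M)) ↔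
          Function.Injective ((LinearMap.ker π).subtype.lTensor T) := by
  let Q := ProjectiveResolution.of (ModuleCat.of R M)
  let π : Q.complex.X 0 →ₗ[R] M := (Q.π.f 0).hom
  let d1 : Q.complex.X 1 →ₗ[R] Q.complex.X 0 := (Q.complex.d 1 0).hom
  let d2 : Q.complex.X 2 →ₗ[R] Q.complex.X 1 := (Q.complex.d 2 1).hom
  have hproj : Module.Projective R (Q.complex.X 0) :=
    (IsProjective.iff_projective _).2 (Q.projective 0)
  have hd1 : LinearMap.range d1 = LinearMap.ker π :=
    (ShortComplex.moduleCat_exact_iff_range_eq_ker _).1 Q.exact₀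
  have hd2 : Function.Exact d2 d1 :=
    (ShortComplex.ShortExact.moduleCat_exact_iff_function_exact _).1 (Q.exact_succ 0)
  refine ⟨Q.complex.X 0, inferInstance, inferInstance, π, inferInstance,
    (ModuleCat.epi_iff_surjective _).1 (inferInstanceAs (Epi (Q.π.f 0))), ?_⟩
  intro T _ _
  let q : Q.complex.X 1 →ₗ[R] LinearMap.ker π := d1.codRestrict _ (fun x => hd1 ▸ ⟨x, rfl⟩)
  have hq : Function.Surjective q := by
    rintro ⟨x, hx⟩
    rw [← hd1] at hx
    obtain ⟨y, rfl⟩ := hx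
    exact ⟨y, rfl⟩
  have hq2 : Function.Exact d2 q := by
    intro x
    rw [← hd2 x, ← Subtype.coe_inj]; rfl
  have hsub : (LinearMap.ker π).subtype ∘ₗ q = d1 := rfl
  have e1 : Function.Exact (d2.lTensor T) (q.lTensor T) := lTensor_exact T hq2 hq
  have sq := LinearMap.lTensor_surjective T hq
  have key : Subsingleton (((Tor (ModuleCat.{u} R) 1).obj (ModuleCat.of R T)).obj
      (ModuleCat.of R M)) ↔ Function.Exact (d2.lTensor T) (d1.lTensor T) := by
    have iso := Q.isoLeftDerivedObj ((MonoidalCategory.tensoringLeft (ModuleCat R)).obj (ModuleCat.of R T)) 1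
    rw [← ModuleCat.isZero_iff_subsingleton]
    refine (Iso.isZero_iff iso).trans ?_
    refine (HomologicalComplex.exactAt_iff_isZero_homology _ _).symm.trans ?_
    rw [HomologicalComplex.exactAt_iff' _ 2 1 0 (by simp) (by simp)]
    exact (ShortComplex.ShortExact.moduleCat_exact_iff_function_exact _)
  rw [key, ← hsub, LinearMap.lTensor_comp]
  constructor
  · intro h
    rw [injective_iff_map_eq_zero]
    intro a ha
    obtain ⟨b, rfl⟩ := sq a
    exact (e1 b).2 ((h b).1 ha)
  · intro h x
    rw [← e1 x, LinearMap.comp_apply, map_eq_zero_iff _ h]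

/-- 3x3 lemma -/
lemma balance {R : Type*} [CommRing R] {X1 X2 X3 Y1 Y2 Y3 : Type*}
    [AddCommGroup X1] [AddCommGroup X2] [AddCommGroup X3]
    [AddCommGroup Y1] [AddCommGroup Y2] [AddCommGroup Y3]
    [Module R X1] [Module R X2] [Module R X3] [Module R Y1] [Module R Y2] [Module R Y3]
    (f : X1 →ₗ[R] X2) (g : X2 →ₗ[R] X3) (f' : Y1 →ₗ[R] Y2) (g' : Y2 →ₗ[R] Y3)
    (hfg : Function.Exact f g) (hg : Function.Surjective g)
    (hfg' : Function.Exact f' g') (hg' : Function.Surjective g')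
    (h2 : Function.Injective (f'.lTensor X2))
    (h : Function.Injective (f.rTensor Y3)) : Function.Injective (f'.lTensor X3) := by
  rw [injective_iff_map_eq_zero]
  intro a ha
  obtain ⟨b, rfl⟩ := LinearMap.rTensor_surjective Y1 hg a
  have c (z) : (f'.lTensor X3) (g.rTensor Y1 z) = g.rTensor Y2 (f'.lTensor X2 z) := by
    simp only [← LinearMap.comp_apply, LinearMap.lTensor_comp_rTensor,
      LinearMap.rTensor_comp_lTensor]
  rw [c] at ha
  obtain ⟨w, hw⟩ := (rTensor_exact Y2 hfg hg _).1 ha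
  have c2 (z) : f.rTensor Y3 (g'.lTensor X1 z) = g'.lTensor X2 (f.rTensor Y2 z) := by
    simp only [← LinearMap.comp_apply, LinearMap.lTensor_comp_rTensor,
      LinearMap.rTensor_comp_lTensor]
  have c3 (z) : f.rTensor Y2 (f'.lTensor X1 z) = f'.lTensor X2 (f.rTensor Y1 z) := by
    simp only [← LinearMap.comp_apply, LinearMap.lTensor_comp_rTensor,
      LinearMap.rTensor_comp_lTensor]
  have h0 : g'.lTensor X1 w = 0 := by
    apply h
    rw [c2, hw, map_zero]
    exact (lTensor_exact X2 hfg' hg' _).2 ⟨b, rfl⟩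
  obtain ⟨v, rfl⟩ := (lTensor_exact X1 hfg' hg' _).1 h0
  rw [c3] at hw
  rw [← h2 hw]
  exact (rTensor_exact Y1 hfg hg _).2 ⟨v, rfl⟩

lemma balance' {R : Type*} [CommRing R] {X1 X2 X3 Y1 Y2 Y3 : Type*}
    [AddCommGroup X1] [AddCommGroup X2] [AddCommGroup X3]
    [AddCommGroup Y1] [AddCommGroup Y2] [AddCommGroup Y3]
    [Module R X1] [Module R X2] [Module R X3] [Module R Y1] [Module R Y2] [Module R Y3]
    (f : X1 →ₗ[R] X2) (g : X2 →ₗ[R] X3) (f' : Y1 →ₗ[R] Y2) (g' : Y2 →ₗ[R] Y3)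
    (hfg : Function.Exact f g) (hg : Function.Surjective g)
    (hfg' : Function.Exact f' g') (hg' : Function.Surjective g')
    (h2 : Function.Injective (f.rTensor Y2))
    (h : Function.Injective (f'.lTensor X3)) : Function.Injective (f.rTensor Y3) := by
  rw [← LinearMap.lTensor_inj_iff_rTensor_inj] at h2 ⊢
  rw [LinearMap.lTensor_inj_iff_rTensor_inj] at h
  exact balance f' g' f g hfg' hg' hfg hg h2 h

/-- `I ⊗ M → M` is injective for nonnil f.g. `I`. -/
def NF (R : Type u) [CommRing R] (M : Type u) [AddCommGroup M] [Module R M] : Prop :=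
  ∀ I : Ideal R, I.FG → ¬ I ≤ nilradical R → Function.Injective (I.subtype.rTensor M)

lemma nf_of_phiFlat {R : Type u} [CommRing R] {M : Type u} [AddCommGroup M] [Module R M]
    (h : IsPhiFlat R M) : NF R M := by
  intro I _ hI
  obtain ⟨P, _, _, π, hP, hπ, hT⟩ := tor_bridge R M
  have ht : IsPhiTorsion R (R ⧸ I) := by
    intro t
    refine ⟨I, hI, fun a ha => ?_⟩
    obtain ⟨r, rfl⟩ := Ideal.Quotient.mk_surjective t
    rw [← Ideal.Quotient.mk_eq_mk, ← Submodule.Quotient.mk_smul, Submodule.Quotient.mk_eq_zero]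
    exact I.mul_mem_right r ha
  have := (hT (R ⧸ I)).1 (h _ ht)
  exact balance' I.subtype I.mkQ (LinearMap.ker π).subtype π
    (LinearMap.exact_subtype_mkQ I) I.mkQ_surjective (LinearMap.exact_subtype_ker_map π) hπ
    (Module.Flat.rTensor_preserves_injective_linearMap _ I.subtype_injective) this

lemma NF.all {R : Type u} [CommRing R] {M : Type u} [AddCommGroup M] [Module R M]
    (h : NF R M) (J : Ideal R) (hJ : ¬ J ≤ nilradical R) :
    Function.Injective (J.subtype.rTensor M) := by
  rw [injective_iff_map_eq_zero]
  intro x hx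
  obtain ⟨s, hsJ, hs⟩ := SetLike.not_le_iff_exists.1 hJ
  obtain ⟨J0, hfg, hle, y, rfl⟩ := Submodule.exists_fg_le_eq_rTensor_inclusion x
  have hle2 : J0 ⊔ Ideal.span {s} ≤ J := sup_le hle (by simpa [Ideal.span_le] using hsJ)
  have hinj := h (J0 ⊔ Ideal.span {s}) (hfg.sup (Submodule.fg_span_singleton s))
    (fun hn => hs (hn (le_sup_right (a := J0) (Ideal.mem_span_singleton_self s))))
  rw [← LinearMap.rTensor_comp_apply] at hx
  have h1 : (Submodule.inclusion (le_sup_left : J0 ≤ J0 ⊔ Ideal.span {s})).rTensor M y = 0 := by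
    apply hinj
    rw [← LinearMap.rTensor_comp_apply, map_zero, ← hx]; rfl
  have h2 : Submodule.inclusion hle = Submodule.inclusion hle2 ∘ₗ
    (Submodule.inclusion (le_sup_left : J0 ≤ J0 ⊔ Ideal.span {s})) := rfl
  rw [h2, LinearMap.rTensor_comp_apply, h1, map_zero]

lemma NF.fin {R : Type u} [CommRing R] {M P : Type u} [AddCommGroup M] [Module R M]
    [AddCommGroup P] [Module R P] [Module.Flat R P] (h : NF R M) (π : P →ₗ[R] M)
    (hπ : Function.Surjective π) (n : ℕ) :
    ∀ (T : Type u) [AddCommGroup T] [Module R T], IsPhiTorsion R T → ∀ v : Fin n → T,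
      Submodule.span R (Set.range v) = ⊤ →
      Function.Injective ((LinearMap.ker π).subtype.lTensor T) := by
  induction n with
  | zero =>
    intro T _ _ _ v hv
    have : Subsingleton T := by
      rw [Set.range_eq_empty, Submodule.span_empty] at hv
      exact (Submodule.subsingleton_iff R).1 (subsingleton_iff_bot_eq_top.1 hv)
    exact Function.injective_of_subsingleton _
  | succ n ih =>
    intro T _ _ hT v hv
    let f : R →ₗ[R] T := LinearMap.toSpanSingleton R T (v 0)
    let T' := LinearMap.range f
    have hT' : Function.Injective ((LinearMap.ker π).subtype.lTensor T') := by
      have hker : ¬ LinearMap.ker f ≤ nilradical R := by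
        obtain ⟨I, hI, hI2⟩ := hT (v 0)
        exact fun hle => hI (le_trans (fun a ha => by simpa [f] using hI2 a ha) hle)
      exact balance (LinearMap.ker f).subtype f.rangeRestrict (LinearMap.ker π).subtype π
        (by intro x; simp [Subtype.ext_iff]) f.surjective_rangeRestrict
        (LinearMap.exact_subtype_ker_map π) hπ
        (Module.Flat.lTensor_preserves_injective_linearMap _ (Submodule.subtype_injective _))
        (h.all _ hker)
    have hT2 : Function.Injective ((LinearMap.ker π).subtype.lTensor (T ⧸ T')) := by
      refine ih (T ⧸ T') ?_ (fun i => T'.mkQ (v i.succ)) ?_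
      · intro t
        obtain ⟨t, rfl⟩ := T'.mkQ_surjective t
        obtain ⟨I, hI, hI2⟩ := hT t
        exact ⟨I, hI, fun a ha => by rw [← map_smul, hI2 a ha, map_zero]⟩
      · have h1 := congrArg (Submodule.map T'.mkQ) hv
        rw [Submodule.map_span, Submodule.map_top, Submodule.range_mkQ, ← Set.range_comp] at h1
        rw [← h1]
        apply le_antisymm
        · apply Submodule.span_mono
          rintro _ ⟨i, rfl⟩
          exact ⟨i.succ, rfl⟩
        · rw [Submodule.span_le]
          rintro _ ⟨i, rfl⟩
          refine Fin.cases ?_ (fun i => ?_) i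
          · have : T'.mkQ (v 0) = 0 := by
              rw [← LinearMap.mem_ker, Submodule.ker_mkQ]
              exact ⟨1, by simp [f]⟩
            simp only [Function.comp_apply, this]
            exact zero_mem _
          · exact Submodule.subset_span ⟨i, rfl⟩
    rw [injective_iff_map_eq_zero]
    intro a ha
    have ha2 : T'.mkQ.rTensor _ a = 0 := by
      apply hT2
      rw [← LinearMap.comp_apply, LinearMap.lTensor_comp_rTensor, ← LinearMap.rTensor_comp_lTensor,
        LinearMap.comp_apply, ha, map_zero, map_zero]
    obtain ⟨b, rfl⟩ := (rTensor_exact _ (LinearMap.exact_subtype_mkQ T') T'.mkQ_surjective _).1 ha2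
    have hb : (LinearMap.ker π).subtype.lTensor T' b = 0 := by
      apply Module.Flat.rTensor_preserves_injective_linearMap (M := P) T'.subtype
        T'.subtype_injective
      rw [← LinearMap.comp_apply, LinearMap.rTensor_comp_lTensor, ← LinearMap.lTensor_comp_rTensor,
        LinearMap.comp_apply, ha, map_zero]
    rw [hT' (hb.trans (map_zero _).symm), map_zero]

lemma NF.phiFlat {R : Type u} [CommRing R] {M : Type u} [AddCommGroup M] [Module R M]
    (h : NF R M) : IsPhiFlat R M := by
  intro T _ _ hT
  obtain ⟨P, _, _, π, hP, hπ, hb⟩ := tor_bridge R M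
  rw [hb, injective_iff_map_eq_zero]
  intro x hx
  obtain ⟨T', hfin, hT'⟩ := TensorProduct.exists_finite_submodule_left_of_setFinite {x}
    (Set.finite_singleton x)
  obtain ⟨y, rfl⟩ := hT' rfl
  obtain ⟨n, v, hv⟩ := Module.Finite.exists_fin (R := R) (M := T')
  have htor : IsPhiTorsion R T' := by
    intro t
    obtain ⟨I, hI, hI2⟩ := hT t
    exact ⟨I, hI, fun a ha => Subtype.ext (hI2 a ha)⟩
  have hinj := h.fin π hπ n T' htor v hv
  have hb : (LinearMap.ker π).subtype.lTensor T' y = 0 := by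
    apply Module.Flat.rTensor_preserves_injective_linearMap (M := P) T'.subtype
      T'.subtype_injective
    rw [← LinearMap.comp_apply, LinearMap.rTensor_comp_lTensor, ← LinearMap.lTensor_comp_rTensor,
      LinearMap.comp_apply, hx, map_zero]
  rw [hinj (hb.trans (map_zero _).symm), map_zero]

lemma exists_sum_gen {R : Type*} [CommRing R] {I M : Type*} [AddCommGroup I] [Module R I]
    [AddCommGroup M] [Module R M] {n : ℕ} (a : Fin n → I)
    (ha : Submodule.span R (Set.range a) = ⊤) (w : I ⊗[R] M) :
    ∃ ψ : Fin n → M, w = ∑ i, a i ⊗ₜ[R] ψ i := by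
  induction w with
  | zero => exact ⟨0, by simp⟩
  | tmul x y =>
    obtain ⟨c, rfl⟩ := (Submodule.mem_span_range_iff_exists_fun R).1
      (ha ▸ Submodule.mem_top : x ∈ Submodule.span R (Set.range a))
    exact ⟨fun i => c i • y, by simp [TensorProduct.sum_tmul, TensorProduct.smul_tmul]⟩
  | add x y hx hy =>
    obtain ⟨f, rfl⟩ := hx
    obtain ⟨g, rfl⟩ := hy
    exact ⟨f + g, by simp [TensorProduct.tmul_add, Finset.sum_add_distrib]⟩

lemma factor_inj {R : Type u} [CommRing R] {E X Y : Type u} [AddCommGroup E] [Module R E]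
    [AddCommGroup X] [Module R X] [AddCommGroup Y] [Module R Y] (hE : Module.Injective R E)
    (κ : X →ₗ[R] Y) (ψ : X →ₗ[R] E) (h : ∀ x, κ x = 0 → ψ x = 0) :
    ∃ y : Y →ₗ[R] E, ∀ x, y (κ x) = ψ x := by
  let q : X ⧸ LinearMap.ker κ →ₗ[R] Y := (LinearMap.ker κ).liftQ κ le_rfl
  have hq : Function.Injective q := LinearMap.ker_eq_bot.1 (Submodule.ker_liftQ_eq_bot' _ _ rfl)
  obtain ⟨y, hy⟩ := hE.out q hq ((LinearMap.ker κ).liftQ ψ h)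
  exact ⟨y, fun x => hy ((LinearMap.ker κ).mkQ x)⟩

lemma forward_core {R : Type u} [CommRing R] {E₁ E₂ M : Type u} [AddCommGroup E₁] [Module R E₁]
    [AddCommGroup E₂] [Module R E₂] [AddCommGroup M] [Module R M]
    (h1 : Module.Injective R E₁) (h2 : Module.Injective R E₂) (I : Ideal R)
    (hI : Module.FinitePresentation R I) (hM : Function.Injective (I.subtype.rTensor M)) :
    Function.Injective (I.subtype.rTensor ((M →ₗ[R] E₁) →ₗ[R] E₂)) := by
  obtain ⟨n, f, hf⟩ := Module.Finite.exists_fin' R I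
  obtain ⟨m, k, hk⟩ := Submodule.fg_iff_exists_fin_generating_family.1
    (Module.FinitePresentation.fg_ker f hf)
  let a : Fin n → I := fun i => f (Pi.single i 1)
  have hfa (r : Fin n → R) : f r = ∑ i, r i • a i := by
    have hsum : r = ∑ i, r i • Pi.single i 1 := by
      ext j
      simp [Finset.sum_apply, Pi.single_apply]
    conv_lhs => rw [hsum]
    simp [a, map_sum]
  have ha : Submodule.span R (Set.range a) = ⊤ := by
    rw [eq_top_iff]
    intro x _
    obtain ⟨r, rfl⟩ := hf x
    rw [hfa]
    exact Submodule.sum_mem _ fun i _ =>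
      Submodule.smul_mem _ _ (Submodule.subset_span ⟨i, rfl⟩)
  have hka (j) : ∑ i, k j i • a i = 0 := by
    rw [← hfa, ← LinearMap.mem_ker, ← hk]
    exact Submodule.subset_span ⟨j, rfl⟩
  rw [injective_iff_map_eq_zero]
  intro w hw
  obtain ⟨ψ, rfl⟩ := exists_sum_gen a ha w
  have hz (x : M →ₗ[R] E₁) : ∑ i, ψ i ((a i : R) • x) = 0 := by
    have := congrArg (fun t => (TensorProduct.lid R _ t) x) hw
    simpa [map_sum, LinearMap.sum_apply] using this
  let Ψ : (Fin n → (M →ₗ[R] E₁)) →ₗ[R] E₂ := LinearMap.lsum R (fun _ => M →ₗ[R] E₁) R ψ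
  let κ : (Fin n → (M →ₗ[R] E₁)) →ₗ[R] (Fin m → (M →ₗ[R] E₁)) :=
    LinearMap.pi fun j => ∑ i, k j i • LinearMap.proj i
  have hκ (x) (j) : κ x j = ∑ i, k j i • x i := by
    simp [κ, LinearMap.sum_apply]
  have hΨ (x) : Ψ x = ∑ i, ψ i (x i) := by simp [Ψ, LinearMap.sum_apply]
  obtain ⟨y, hy⟩ := factor_inj h2 κ Ψ (by
    intro x hx
    let g : (Fin n → R) →ₗ[R] (M →ₗ[R] E₁) :=
      LinearMap.lsum R (fun _ => R) R (fun i => LinearMap.toSpanSingleton R _ (x i))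
    have hg (r) : g r = ∑ i, r i • x i := by simp [g, LinearMap.sum_apply]
    have hker : LinearMap.ker f ≤ LinearMap.ker g := by
      rw [← hk, Submodule.span_le]
      rintro _ ⟨j, rfl⟩
      change g (k j) = 0
      rw [hg, ← hκ, hx]; rfl
    let h : I →ₗ[R] (M →ₗ[R] E₁) := (LinearMap.ker f).liftQ g hker ∘ₗ
      (f.quotKerEquivOfSurjective hf).symm.toLinearMap
    have hh (r) : h (f r) = g r := by
      have : (f.quotKerEquivOfSurjective hf).symm (f r) = (LinearMap.ker f).mkQ r := by
        rw [LinearEquiv.symm_apply_eq]; rfl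
      simp only [h, LinearMap.comp_apply, LinearEquiv.coe_coe, this]
      simp
    obtain ⟨H, hH⟩ := h1.out (I.subtype.rTensor M) hM (TensorProduct.lift h)
    let x0 : M →ₗ[R] E₁ := H ∘ₗ (TensorProduct.mk R R M 1)
    have hx0 (i) : x i = (a i : R) • x0 := by
      have : x i = h (a i) := by
        rw [hh, hg]
        rw [Finset.sum_eq_single i (fun b _ hb => by simp [Pi.single_eq_of_ne hb]) (by simp)]
        simp
      ext z
      have h3 := hH (a i ⊗ₜ z)
      rw [TensorProduct.lift.tmul] at h3
      rw [this, ← h3]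
      simp [x0, ← map_smul, TensorProduct.smul_tmul']
    rw [hΨ]
    simpa only [hx0] using hz x0)
  apply TensorProduct.sum_tmul_eq_zero_of_vanishesTrivially
  refine TensorProduct.VanishesTrivially.of_fintype (κ := Fin m) (fun i j => k j i)
    (fun j => y ∘ₗ LinearMap.single R (fun _ => M →ₗ[R] E₁) j) ?_ hka
  intro i
  ext x
  have h3 := hy (Pi.single i x)
  rw [hΨ, Finset.sum_eq_single i (fun b _ hb => by simp [Pi.single_eq_of_ne hb]) (by simp),
    Pi.single_eq_same] at h3
  rw [← h3]
  have h4 : κ (Pi.single i x) = ∑ j, k j i • Pi.single j x := by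
    ext1 j
    rw [hκ, Finset.sum_eq_single i (fun b _ hb => by simp [Pi.single_eq_of_ne hb]) (by simp),
      Pi.single_eq_same, Finset.sum_apply, Finset.sum_eq_single j
        (fun b _ hb => by simp [Pi.single_eq_of_ne hb.symm]) (by simp)]
    simp
  rw [h4]
  simp [LinearMap.sum_apply]

lemma charModule_cogen (R : Type u) [CommRing R] :
    IsInjectiveCogenerator R (CharacterModule R) := by
  refine ⟨Module.Flat.iff_characterModule_injective.1 inferInstance, ?_⟩
  intro M _ _ h
  refine ⟨fun a b => sub_eq_zero.1 (CharacterModule.eq_zero_of_character_apply fun c => ?_)⟩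
  let F : M →ₗ[R] CharacterModule R :=
    { toFun := fun m => (c.comp ((LinearMap.toSpanSingleton R M m).toAddMonoidHom) : R →+ _)
      map_add' := fun x y => by
        apply CharacterModule.ext
        intro r
        change c (r • (x + y)) = c (r • x) + c (r • y)
        rw [smul_add, map_add]
      map_smul' := fun s x => by
        apply CharacterModule.ext
        intro r
        change c (r • (s • x)) = c ((s • r) • x)
        rw [smul_smul, smul_eq_mul, mul_comm] }
  have := congrArg (fun t : CharacterModule R => t 1) (LinearMap.congr_fun (h F) (a - b))
  change c ((1 : R) • (a - b)) = 0 at this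
  rwa [one_smul] at this

lemma backward_core {R : Type u} [CommRing R] {E : Type u} [AddCommGroup E] [Module R E]
    (hE : IsInjectiveCogenerator R E) (I : Ideal R) (hI : I.FG)
    (H : ∀ J : Type u, Function.Injective
      (I.subtype.rTensor (((J →₀ R) →ₗ[R] E) →ₗ[R] E))) :
    Module.FinitePresentation R I := by
  classical
  have : Module.Finite R I := Module.Finite.iff_fg.2 hI
  obtain ⟨n, f, hf⟩ := Module.Finite.exists_fin' R I
  refine Module.finitePresentation_of_free_of_surjective f hf ?_
  let a : Fin n → I := fun i => f (Pi.single i 1)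
  have hsum (r : Fin n → R) : r = ∑ i, r i • Pi.single i 1 := by
    ext j
    simp [Finset.sum_apply, Pi.single_apply]
  have hfa (r : Fin n → R) : f r = ∑ i, r i • a i := by
    conv_lhs => rw [hsum r]
    simp [a, map_sum]
  have ha : Submodule.span R (Set.range a) = ⊤ := by
    rw [eq_top_iff]
    intro x _
    obtain ⟨r, rfl⟩ := hf x
    rw [hfa]
    exact Submodule.sum_mem _ fun i _ =>
      Submodule.smul_mem _ _ (Submodule.subset_span ⟨i, rfl⟩)
  let K := LinearMap.ker f
  let S := (K →₀ R) →ₗ[R] E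
  -- single-coordinate embedding `E → S`
  let ι : K → E →ₗ[R] S := fun x =>
    (LinearMap.lcomp R E (Finsupp.lapply x)) ∘ₗ (LinearMap.lsmul R E).flip
  have hι (x y : K) (e : E) (r : K →₀ R) : ι x e r = r x • e := rfl
  let F : (K →₀ (K →ₗ[R] E)) →ₗ[R] (K →ₗ[R] S) :=
    Finsupp.lsum R fun x => LinearMap.llcomp R K E S (ι x)
  have hF (x : K) (g : K →ₗ[R] E) : F (Finsupp.single x g) = ι x ∘ₗ g := by
    simp [F]; rfl
  have hFev (G : K →₀ (K →ₗ[R] E)) (z x : K) : F G z (Finsupp.single x 1) = G x z := by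
    induction G using Finsupp.induction_linear with
    | zero => rw [map_zero]; rfl
    | add p q hp hq =>
      rw [map_add, Finsupp.add_apply, LinearMap.add_apply, LinearMap.add_apply, hp, hq]; rfl
    | single y g =>
      rw [hF, LinearMap.comp_apply, hι y y]
      by_cases hxy : x = y
      · subst hxy; simp
      · simp [Finsupp.single_apply, hxy, Ne.symm hxy]
  have hFinj : Function.Injective F := by
    intro p q hpq
    ext x z
    rw [← hFev, ← hFev, hpq]
  obtain ⟨Φ, hΦ⟩ := hE.1.out F hFinj
    (Finsupp.lsum R fun x => LinearMap.applyₗ x)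
  let ψ : Fin n → (S →ₗ[R] E) := fun i =>
    Φ ∘ₗ (LinearMap.lcomp R S (LinearMap.proj i ∘ₗ K.subtype)) ∘ₗ (LinearMap.lsmul R S).flip
  have hψ (i) (s : S) : ψ i s = Φ ((LinearMap.toSpanSingleton R S s) ∘ₗ
      (LinearMap.proj i ∘ₗ K.subtype)) := rfl
  have hw : ∑ i, a i ⊗ₜ[R] ψ i = 0 := by
    apply H K
    apply (TensorProduct.lid R _).injective
    ext s
    have : ∑ i, ψ i ((a i : R) • s) = 0 := by
      simp only [hψ]
      rw [← map_sum]
      convert map_zero Φ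
      ext1 z
      have hz := hfa z
      rw [LinearMap.mem_ker.1 z.2] at hz
      have hz := congrArg (fun t : I => (t : R) • s) hz
      simp [Finset.sum_smul, mul_smul] at hz
      simpa [LinearMap.sum_apply] using hz.symm
    simpa [map_sum, LinearMap.sum_apply] using this
  obtain ⟨m, c, y, hy, hc⟩ := TensorProduct.vanishesTrivially_of_sum_tmul_eq_zero R ha hw
  let K0 : Submodule R (Fin n → R) := Submodule.span R (Set.range fun j i => c i j)
  have hK0 : K0 = K := by
    apply le_antisymm
    · rw [Submodule.span_le]
      rintro _ ⟨j, rfl⟩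
      change f _ = 0
      rw [hfa, hc]
    · intro x hx
      by_contra hne
      let q := K0.mkQ
      have hqx : q x ≠ 0 := by simpa [q] using hne
      have : ∃ g : ((Fin n → R) ⧸ K0) →ₗ[R] E, g (q x) ≠ 0 := by
        by_contra! hcon
        have hs : Subsingleton (Submodule.span R {q x}) := by
          apply hE.2
          intro g
          obtain ⟨g', hg'⟩ := hE.1.out (Submodule.span R {q x}).subtype
            (Submodule.subtype_injective _) g
          ext ⟨z, hz⟩
          obtain ⟨r, rfl⟩ := Submodule.mem_span_singleton.1 hz
          rw [← hg']
          simp [hcon]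
        apply hqx
        have := congrArg Subtype.val (hs.elim ⟨q x, Submodule.mem_span_singleton_self _⟩ 0)
        simpa using this
      obtain ⟨g, hg⟩ := this
      apply hg
      let x' : K := ⟨x, hx⟩
      let G : (Fin n → R) →ₗ[R] S := ι x' ∘ₗ g ∘ₗ q
      have e1 : Φ (G ∘ₗ K.subtype) = g (q x) := by
        have := hΦ (Finsupp.single x' (g ∘ₗ q ∘ₗ K.subtype))
        rw [hF, Finsupp.lsum_single] at this
        exact this
      have e2 : G ∘ₗ K.subtype = ∑ i, LinearMap.toSpanSingleton R S (G (Pi.single i 1)) ∘ₗ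
          (LinearMap.proj i ∘ₗ K.subtype) := by
        ext1 z
        rw [LinearMap.comp_apply, Submodule.subtype_apply]
        conv_lhs => rw [hsum z]
        simp [LinearMap.sum_apply, map_sum]
      rw [← e1, e2, map_sum]
      simp only [← hψ, hy, LinearMap.sum_apply, LinearMap.smul_apply]
      rw [Finset.sum_comm]
      refine Finset.sum_eq_zero fun j _ => ?_
      simp only [← map_smul, ← map_sum]
      have : ∑ i, c i j • Pi.single i 1 = (fun i => c i j) := (hsum _).symm
      rw [this]
      have : q (fun i => c i j) = 0 := by
        simp only [q, Submodule.mkQ_apply, Submodule.Quotient.mk_eq_zero]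
        exact Submodule.subset_span ⟨j, rfl⟩
      simp [G, this]
  change K.FG
  rw [← hK0]
  exact Submodule.fg_span (Set.finite_range _)

/-- A φ-ring `R` is nonnil-coherent if and only if for all injective
cogenerators `E₁, E₂` and every φ-flat module `M`, the double dual
`Hom_R(Hom_R(M,E₁),E₂)` is φ-flat. -/
theorem nonnilCoherent_iff_double_dual_phiFlat (R : Type u) [CommRing R]
    (hR : IsPhiRing R) :
    IsNonnilCoherent R ↔
      ∀ (E₁ : Type u) [AddCommGroup E₁] [Module R E₁]
        (E₂ : Type u) [AddCommGroup E₂] [Module R E₂]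
        (M : Type u) [AddCommGroup M] [Module R M],
        IsInjectiveCogenerator R E₁ → IsInjectiveCogenerator R E₂ → IsPhiFlat R M →
          IsPhiFlat R ((M →ₗ[R] E₁) →ₗ[R] E₂) := by
  constructor
  · intro hc E₁ _ _ E₂ _ _ M _ _ h1 h2 hM
    apply NF.phiFlat
    intro I hI hI2
    exact forward_core h1.1 h2.1 I (hc I hI hI2) (nf_of_phiFlat hM I hI hI2)
  · intro h I hI hI2
    refine backward_core (charModule_cogen R) I hI fun J => ?_
    refine nf_of_phiFlat (h _ _ _ (charModule_cogen R) (charModule_cogen R) ?_) I hI hI2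
    intro T _ _ _
    have : Projective (ModuleCat.of R (J →₀ R)) :=
      (IsProjective.iff_projective _).1 inferInstance
    exact ModuleCat.isZero_iff_subsingleton.1 (isZero_Tor_succ_of_projective _ _ _ 0)
end

section
/- Let R be a nonnil-coherent φ-ring, M an R-module, T a finitely presented φ-torsion R-module, and E an injective R-module. Then there is an isomorphism of abelian groups Tor_1^R(T, Hom_R(M,E)) ≅ Hom_R(Ext_R^1(T,M), E). -/
open CategoryTheory

universe u

lemma fp_aux (R : Type u) [CommRing R] (hcoh : IsNonnilCoherent R) :
    ∀ (n : ℕ) (K : Submodule R (Fin n → R)), K.FG →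
      (∀ v : Fin n → R, ∃ a, a ∉ nilradical R ∧ a • v ∈ K) → Module.FinitePresentation R K := by
  intro n
  induction n with
  | zero => intro K _ _; infer_instance
  | succ n ih =>
    intro K hK hv
    let l : K →ₗ[R] R := LinearMap.proj 0 ∘ₗ K.subtype
    have : Module.Finite R K := Module.Finite.iff_fg.mpr hK
    have hI : (LinearMap.range l).FG := Module.Finite.iff_fg.mp inferInstance
    have hI2 : ¬ LinearMap.range l ≤ nilradical R := by
      intro h
      obtain ⟨a, ha, hm⟩ := hv (Pi.single 0 1)
      exact ha (h ⟨⟨_, hm⟩, by simp [l]⟩)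
    have : Module.FinitePresentation R (LinearMap.range l) := hcoh _ hI hI2
    have hsur : Function.Surjective l.rangeRestrict := LinearMap.surjective_rangeRestrict l
    have hfg := Module.FinitePresentation.fg_ker l.rangeRestrict hsur
    let c : (Fin n → R) →ₗ[R] (Fin (n+1) → R) :=
      { toFun := fun x => Fin.cons 0 x
        map_add' := fun x y => by
          ext i; refine Fin.cases ?_ (fun j => ?_) i <;> simp
        map_smul' := fun r x => by
          ext i; refine Fin.cases ?_ (fun j => ?_) i <;> simp }
    let s : (Fin (n+1) → R) →ₗ[R] (Fin n → R) := LinearMap.funLeft R R Fin.succ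
    have hsc : ∀ x, s (c x) = x := fun x => by ext i; simp [s, c, LinearMap.funLeft]
    have hcs : ∀ x, x 0 = 0 → c (s x) = x := fun x hx => by
      ext i; refine Fin.cases ?_ (fun j => ?_) i <;> simp [s, c, LinearMap.funLeft, hx]
    have hker : ∀ x : LinearMap.ker l.rangeRestrict, (x : K).1 0 = 0 := fun x => by
      exact congrArg Subtype.val (LinearMap.mem_ker.mp x.2)
    let e : K.comap c ≃ₗ[R] LinearMap.ker l.rangeRestrict :=
      LinearEquiv.ofLinearMap
        (LinearMap.codRestrict _ (LinearMap.codRestrict _ (c ∘ₗ (K.comap c).subtype)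
          (fun x => x.2)) (fun x => by
            rw [LinearMap.ker_rangeRestrict]
            show (Fin.cons 0 x.1 : Fin (n+1) → R) 0 = 0
            simp))
        (LinearMap.codRestrict _ (s ∘ₗ K.subtype ∘ₗ (LinearMap.ker l.rangeRestrict).subtype)
          (fun x => by
            show c (s (x : K).1) ∈ K
            rw [hcs _ (hker x)]
            exact (x : K).2))
        (by
          ext x : 1
          apply Subtype.ext; apply Subtype.ext
          exact hcs _ (hker x))
        (by
          ext x : 1
          apply Subtype.ext
          exact hsc _)
    have : Module.Finite R (LinearMap.ker l.rangeRestrict) := Module.Finite.iff_fg.mpr hfg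
    have : Module.Finite R (K.comap c) := Module.Finite.equiv e.symm
    have : Module.FinitePresentation R (K.comap c) := by
      refine ih _ (Module.Finite.iff_fg.mp inferInstance) (fun v => ?_)
      obtain ⟨a, ha, hm⟩ := hv (c v)
      exact ⟨a, ha, by simpa using hm⟩
    have : Module.FinitePresentation R (LinearMap.ker l.rangeRestrict) := by
      have h := Module.FinitePresentation.of_equiv (R := R) (M := K.comap c)
        (N := LinearMap.ker l.rangeRestrict) e
      exact h
    exact Module.finitePresentation_of_ker l.rangeRestrict hsur

lemma injective_exact {R : Type u} [CommRing R] {A B C E : Type u} [AddCommGroup A] [Module R A]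
    [AddCommGroup B] [Module R B] [AddCommGroup C] [Module R C] [AddCommGroup E] [Module R E]
    (hE : Module.Injective R E) (f : A →ₗ[R] B) (g : B →ₗ[R] C) (h : Function.Exact f g)
    (φ : B →ₗ[R] E) (hφ : φ ∘ₗ f = 0) : ∃ ψ : C →ₗ[R] E, ψ ∘ₗ g = φ := by
  let i : (B ⧸ LinearMap.ker g) →ₗ[R] C := (LinearMap.ker g).liftQ g le_rfl
  have hi : Function.Injective i := by
    rw [← LinearMap.ker_eq_bot]
    exact Submodule.ker_liftQ_eq_bot _ _ _ le_rfl
  have hle : LinearMap.ker g ≤ LinearMap.ker φ := by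
    intro x hx
    obtain ⟨y, rfl⟩ := (h x).mp hx
    exact LinearMap.congr_fun hφ y
  obtain ⟨ψ, hψ⟩ := hE.out i hi ((LinearMap.ker g).liftQ φ hle)
  refine ⟨ψ, LinearMap.ext fun x => ?_⟩
  simpa [i] using hψ (Submodule.Quotient.mk x)

lemma factor_surj {R : Type u} [CommRing R] {B C M : Type*} [AddCommGroup B] [Module R B]
    [AddCommGroup C] [Module R C] [AddCommGroup M] [Module R M]
    (f : B →ₗ[R] C) (hf : Function.Surjective f) (φ : B →ₗ[R] M)
    (hle : LinearMap.ker f ≤ LinearMap.ker φ) : ∃ ψ : C →ₗ[R] M, ψ ∘ₗ f = φ := by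
  refine ⟨(LinearMap.ker f).liftQ φ hle ∘ₗ (f.quotKerEquivOfSurjective hf).symm, ?_⟩
  ext1 x
  have : (f.quotKerEquivOfSurjective hf).symm (f x) = Submodule.Quotient.mk x := by
    rw [LinearEquiv.symm_apply_eq]; rfl
  simp [this]

open TensorProduct in
/-- evaluation map -/
noncomputable def thetaMap (R : Type u) [CommRing R] (K M E : Type u) [AddCommGroup K] [Module R K]
    [AddCommGroup M] [Module R M] [AddCommGroup E] [Module R E] :
    K ⊗[R] (M →ₗ[R] E) →ₗ[R] ((K →ₗ[R] M) →ₗ[R] E) :=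
  TensorProduct.lift (LinearMap.mk₂ R (fun k f => f ∘ₗ LinearMap.applyₗ k)
    (fun _ _ _ => by ext; simp) (fun _ _ _ => by ext; simp)
    (fun _ _ _ => by ext; simp) (fun _ _ _ => by ext; simp))

open TensorProduct in
lemma thetaMap_tmul (R : Type u) [CommRing R] (K M E : Type u) [AddCommGroup K] [Module R K]
    [AddCommGroup M] [Module R M] [AddCommGroup E] [Module R E] (k : K) (f : M →ₗ[R] E)
    (g : K →ₗ[R] M) : thetaMap R K M E (k ⊗ₜ f) g = f (g k) := rfl

lemma thetaMap_nat {R : Type u} [CommRing R] {K F : Type u} (M E : Type u)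
    [AddCommGroup K] [Module R K] [AddCommGroup F] [Module R F]
    [AddCommGroup M] [Module R M] [AddCommGroup E] [Module R E] (j : K →ₗ[R] F) :
    (LinearMap.lcomp R E (LinearMap.lcomp R M j)) ∘ₗ thetaMap R K M E =
      thetaMap R F M E ∘ₗ j.rTensor (M →ₗ[R] E) := by
  ext; rfl

lemma thetaMap_free (R : Type u) [CommRing R] (n : ℕ) (M E : Type u)
    [AddCommGroup M] [Module R M] [AddCommGroup E] [Module R E] :
    Function.Bijective (thetaMap R (Fin n → R) M E) := by
  let e1 := (TensorProduct.comm R (Fin n → R) (M →ₗ[R] E)) ≪≫ₗ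
    (TensorProduct.piScalarRight R R (M →ₗ[R] E) (Fin n)) ≪≫ₗ
    (LinearMap.lsum R (fun _ : Fin n => M) R) ≪≫ₗ
    (LinearEquiv.congrLeft E R ((Pi.basisFun R (Fin n)).constr R : (Fin n → M) ≃ₗ[R] _))
  have : thetaMap R (Fin n → R) M E = e1.toLinearMap := by
    apply TensorProduct.ext'
    intro x f
    ext g
    rw [thetaMap_tmul]
    have hx : x = ∑ i, x i • (Pi.single i 1 : Fin n → R) := by
      ext j; simp [Finset.sum_apply, Pi.single_apply]
    conv_lhs => rw [hx]
    simp [e1, LinearEquiv.congrLeft, LinearMap.lsum_apply]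
  rw [this]
  exact e1.bijective

lemma thetaMap_fp (R : Type u) [CommRing R] (K M E : Type u) [AddCommGroup K] [Module R K]
    [AddCommGroup M] [Module R M] [AddCommGroup E] [Module R E] (hE : Module.Injective R E)
    [Module.FinitePresentation R K] :
    Function.Bijective (thetaMap R K M E) := by
  obtain ⟨n, m, f, g, hf, hfg⟩ := Module.FinitePresentation.exists_fin' R K
  have hn := thetaMap_free R n M E
  have hm := thetaMap_free R m M E
  have natf := fun x => LinearMap.congr_fun (thetaMap_nat M E f) x
  have natg := fun x => LinearMap.congr_fun (thetaMap_nat M E g) x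
  simp only [LinearMap.comp_apply] at natf natg
  have hfs : Function.Surjective (f.rTensor (M →ₗ[R] E)) := LinearMap.rTensor_surjective _ hf
  have hex : Function.Exact (g.rTensor (M →ₗ[R] E)) (f.rTensor (M →ₗ[R] E)) :=
    rTensor_exact _ hfg hf
  have hinj : Function.Injective (LinearMap.lcomp R M f) := by
    intro a b h
    ext x
    obtain ⟨y, rfl⟩ := hf x
    exact LinearMap.congr_fun h y
  have hex2 : Function.Exact (LinearMap.lcomp R M f) (LinearMap.lcomp R M g) := by
    intro φ
    constructor
    · intro h
      have hle : LinearMap.ker f ≤ LinearMap.ker φ := by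
        intro x hx
        obtain ⟨y, rfl⟩ := (hfg x).mp hx
        exact LinearMap.congr_fun h y
      exact factor_surj f hf φ hle
    · rintro ⟨ψ, rfl⟩
      refine LinearMap.ext fun x => ?_
      simp [LinearMap.lcomp_apply, hfg.apply_apply_eq_zero]
  constructor
  · rw [injective_iff_map_eq_zero]
    intro x hx
    obtain ⟨y, rfl⟩ := hfs x
    rw [← natf] at hx
    obtain ⟨ψ, hψ⟩ := injective_exact hE _ _ hex2 (thetaMap R (Fin n → R) M E y) hx
    obtain ⟨z, rfl⟩ := hm.2 ψ
    have : thetaMap R (Fin n → R) M E y = thetaMap R (Fin n → R) M E (g.rTensor _ z) := by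
      rw [← hψ, ← natg]; rfl
    rw [hn.1 this]
    exact hex.apply_apply_eq_zero z
  · intro φ
    obtain ⟨ψ, hψ⟩ := hE.out (LinearMap.lcomp R M f) hinj φ
    obtain ⟨y, rfl⟩ := hn.2 ψ
    exact ⟨f.rTensor _ y, by rw [← natf]; ext a; exact hψ a⟩

lemma homology_pres {R : Type u} [CommRing R] (S : ShortComplex (ModuleCat.{u} R)) :
    ∃ π : LinearMap.ker S.g.hom →ₗ[R] S.homology, Function.Surjective π ∧
      ∀ x, π x = 0 ↔ ∃ y, S.f.hom y = x.1 := by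
  let e := S.moduleCatHomologyIso.toLinearEquiv
  refine ⟨e.symm.toLinearMap ∘ₗ (LinearMap.range S.moduleCatToCycles).mkQ, ?_, ?_⟩
  · exact e.symm.surjective.comp (Submodule.mkQ_surjective _)
  · intro x
    refine (e.symm.map_eq_zero_iff).trans ((Submodule.Quotient.mk_eq_zero _).trans ?_)
    constructor
    · rintro ⟨y, rfl⟩
      exact ⟨y, rfl⟩
    · rintro ⟨y, hy⟩
      exact ⟨y, Subtype.ext hy⟩

open TensorProduct in
lemma tor_res (R : Type u) [CommRing R] (T Y : Type u) [AddCommGroup T] [Module R T]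
    [AddCommGroup Y] [Module R Y] :
    ∃ (P2 P1 P0 : ModuleCat.{u} R) (d2 : P2 →ₗ[R] P1) (d1 : P1 →ₗ[R] P0) (ε : P0 →ₗ[R] Y),
      Module.Projective R P0 ∧ Function.Exact d2 d1 ∧ Function.Exact d1 ε ∧
      Function.Surjective ε ∧
      ∃ π : LinearMap.ker (d1.lTensor T) →ₗ[R]
          (((Tor (ModuleCat.{u} R) 1).obj (ModuleCat.of R T)).obj (ModuleCat.of R Y)),
        Function.Surjective π ∧ ∀ x, π x = 0 ↔ ∃ y, d2.lTensor T y = x.1 := by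
  let P := projectiveResolution (ModuleCat.of R Y)
  let i0 := P.isoLeftDerivedObj ((MonoidalCategory.tensoringLeft _).obj (ModuleCat.of R T)) 1
  let C := (((MonoidalCategory.tensoringLeft _).obj
    (ModuleCat.of R T)).mapHomologicalComplex _).obj P.complex
  let i1 := C.homologyIsoSc' 2 1 0 (by simp) (by simp)
  obtain ⟨π, h1, h2⟩ := homology_pres (C.sc' 2 1 0)
  let e := (i0 ≪≫ i1).toLinearEquiv
  refine ⟨P.complex.X 2, P.complex.X 1, P.complex.X 0, (P.complex.d 2 1).hom,
    (P.complex.d 1 0).hom, (P.π.f 0).hom, ?_, ?_, ?_, ?_, e.symm.toLinearMap ∘ₗ π, ?_, ?_⟩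
  · exact (IsProjective.iff_projective _).mpr (P.projective 0)
  · exact (ShortComplex.ShortExact.moduleCat_exact_iff_function_exact _).mp (P.exact_succ 0)
  · exact (ShortComplex.ShortExact.moduleCat_exact_iff_function_exact _).mp P.exact₀
  · exact (ModuleCat.epi_iff_surjective _).mp inferInstance
  · exact e.symm.surjective.comp h1
  · intro x
    exact (e.symm.map_eq_zero_iff).trans (h2 x)

lemma ext_res (R : Type u) [CommRing R] (T M : Type u) [AddCommGroup T] [Module R T]
    [AddCommGroup M] [Module R M] :
    ∃ (P2 P1 P0 : ModuleCat.{u} R) (d2 : P2 →ₗ[R] P1) (d1 : P1 →ₗ[R] P0) (ε : P0 →ₗ[R] T),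
      Module.Projective R P0 ∧ Function.Exact d2 d1 ∧ Function.Exact d1 ε ∧
      Function.Surjective ε ∧
      ∃ π : LinearMap.ker (LinearMap.lcomp R M d2) →ₗ[R]
          (((Ext R (ModuleCat.{u} R) 1).obj (Opposite.op (ModuleCat.of R T))).obj
            (ModuleCat.of R M)),
        Function.Surjective π ∧ ∀ x, π x = 0 ↔ ∃ y, LinearMap.lcomp R M d1 y = x.1 := by
  let P := projectiveResolution (ModuleCat.of R T)
  let i0 := P.isoExt (R := R) 1 (ModuleCat.of R M)
  let C := P.complex.linearYonedaObj R (ModuleCat.of R M)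
  let i1 := C.homologyIsoSc' 0 1 2 (by simp) (by simp)
  obtain ⟨π, h1, h2⟩ := homology_pres (C.sc' 0 1 2)
  let e := (i0 ≪≫ i1).toLinearEquiv
  let c : (LinearMap.ker (LinearMap.lcomp R M (P.complex.d 2 1).hom)) →ₗ[R]
      LinearMap.ker (C.sc' 0 1 2).g.hom :=
    { toFun := fun x => ⟨ModuleCat.ofHom x.1, ModuleCat.hom_ext x.2⟩
      map_add' := fun _ _ => rfl
      map_smul' := fun _ _ => rfl }
  have hc : Function.Surjective c := fun y => ⟨⟨ModuleCat.Hom.hom y.1,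
    congrArg ModuleCat.Hom.hom (show P.complex.d 2 1 ≫ (show P.complex.X 1 ⟶ ModuleCat.of R M from y.1) = 0 from y.2)⟩, rfl⟩
  refine ⟨P.complex.X 2, P.complex.X 1, P.complex.X 0, (P.complex.d 2 1).hom,
    (P.complex.d 1 0).hom, (P.π.f 0).hom, ?_, ?_, ?_, ?_, e.symm.toLinearMap ∘ₗ π ∘ₗ c, ?_, ?_⟩
  · exact (IsProjective.iff_projective _).mpr (P.projective 0)
  · exact (ShortComplex.ShortExact.moduleCat_exact_iff_function_exact _).mp (P.exact_succ 0)
  · exact (ShortComplex.ShortExact.moduleCat_exact_iff_function_exact _).mp P.exact₀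
  · exact (ModuleCat.epi_iff_surjective _).mp inferInstance
  · exact e.symm.surjective.comp (h1.comp hc)
  · intro x
    refine (e.symm.map_eq_zero_iff).trans ((h2 _).trans ?_)
    constructor
    · rintro ⟨y, hy⟩
      exact ⟨ModuleCat.Hom.hom y, congrArg ModuleCat.Hom.hom hy⟩
    · rintro ⟨y, hy⟩
      exact ⟨ModuleCat.ofHom y, ModuleCat.hom_ext hy⟩

lemma equiv_of_ker {R : Type u} [CommRing R] {A B C : Type*} [AddCommGroup A] [Module R A]
    [AddCommGroup B] [Module R B] [AddCommGroup C] [Module R C]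
    (f : A →ₗ[R] B) (hf : Function.Surjective f) (g : A →ₗ[R] C) (hg : Function.Surjective g)
    (h : ∀ x, f x = 0 ↔ g x = 0) : Nonempty (B ≃ₗ[R] C) := by
  have hk : LinearMap.ker f = LinearMap.ker g := by ext x; exact h x
  exact ⟨(f.quotKerEquivOfSurjective hf).symm ≪≫ₗ Submodule.quotEquivOfEq _ _ hk ≪≫ₗ
    g.quotKerEquivOfSurjective hg⟩

lemma snake_iso {R : Type u} [CommRing R] {K F T L Q Y : Type u}
    [AddCommGroup K] [Module R K] [AddCommGroup F] [Module R F] [AddCommGroup T] [Module R T]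
    [AddCommGroup L] [Module R L] [AddCommGroup Q] [Module R Q] [AddCommGroup Y] [Module R Y]
    [Module.Flat R F] [Module.Flat R Q]
    (j : K →ₗ[R] F) (p : F →ₗ[R] T) (hj : Function.Injective j) (hp : Function.Surjective p)
    (hjp : Function.Exact j p)
    (i : L →ₗ[R] Q) (q : Q →ₗ[R] Y) (hi : Function.Injective i) (hq : Function.Surjective q)
    (hiq : Function.Exact i q) :
    Nonempty (LinearMap.ker (j.rTensor Y) ≃ₗ[R] LinearMap.ker (i.lTensor T)) := by
  have hf := lTensor_exact K hiq hq
  have hg := lTensor_exact F hiq hq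
  have h₁ : (i.lTensor F) ∘ₗ (j.rTensor L) = (j.rTensor Q) ∘ₗ (i.lTensor K) := by ext; rfl
  have h₂ : (q.lTensor F) ∘ₗ (j.rTensor Q) = (j.rTensor Y) ∘ₗ (q.lTensor K) := by ext; rfl
  have hι₃ : Function.Exact (LinearMap.ker (j.rTensor Y)).subtype (j.rTensor Y) :=
    LinearMap.exact_subtype_ker_map _
  have hπ₁ := rTensor_exact L hjp hp
  have hπ₂ := rTensor_exact Q hjp hp
  have hf₂ : Function.Surjective (q.lTensor K) := LinearMap.lTensor_surjective _ hq
  have hg₁ : Function.Injective (i.lTensor F) := Module.Flat.lTensor_preserves_injective_linearMap i hi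
  have hjQ : Function.Injective (j.rTensor Q) := Module.Flat.rTensor_preserves_injective_linearMap j hj
  have hι₂ : Function.Exact (LinearMap.ker (j.rTensor Q)).subtype (j.rTensor Q) :=
    LinearMap.exact_subtype_ker_map _
  let δ := SnakeLemma.δ' (j.rTensor L) (j.rTensor Q) (j.rTensor Y) (i.lTensor K) (q.lTensor K) hf
    (i.lTensor F) (q.lTensor F) hg h₁ h₂ (LinearMap.ker (j.rTensor Y)).subtype hι₃
    (p.rTensor L) hπ₁ hf₂ hg₁
  have hl : Function.Exact δ (i.lTensor T) :=
    SnakeLemma.exact_δ'_left (j.rTensor L) (j.rTensor Q) (j.rTensor Y) (i.lTensor K) (q.lTensor K) hf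
    (i.lTensor F) (q.lTensor F) hg h₁ h₂ (LinearMap.ker (j.rTensor Y)).subtype hι₃
    (p.rTensor L) hπ₁ (p.rTensor Q) hπ₂ hf₂ hg₁ (i.lTensor T) (by ext; rfl)
    (LinearMap.rTensor_surjective _ hp)
  have hr : Function.Exact (0 : LinearMap.ker (j.rTensor Q) →ₗ[R] _) δ :=
    SnakeLemma.exact_δ'_right (j.rTensor L) (j.rTensor Q) (j.rTensor Y) (i.lTensor K) (q.lTensor K)
    hf (i.lTensor F) (q.lTensor F) hg h₁ h₂ (LinearMap.ker (j.rTensor Q)).subtype hι₂ (LinearMap.ker (j.rTensor Y)).subtype hι₃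
    (p.rTensor L) hπ₁ hf₂ hg₁ 0 (by
      refine LinearMap.ext fun x => ?_
      have : (x : TensorProduct R K Q) = 0 := hjQ ((LinearMap.mem_ker.mp x.2).trans (map_zero _).symm)
      simp [this]) Subtype.val_injective
  refine ⟨LinearEquiv.ofBijective (δ.codRestrict _ (fun x => hl.apply_apply_eq_zero x)) ⟨?_, ?_⟩⟩
  · rw [injective_iff_map_eq_zero]
    intro x hx
    obtain ⟨y, rfl⟩ := (hr x).mp (congrArg Subtype.val hx)
    rfl
  · intro y
    obtain ⟨x, hx⟩ := (hl y.1).mp y.2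
    exact ⟨x, Subtype.ext hx⟩

lemma tor_pres {R : Type u} [CommRing R] {K F T : Type u} (Y : Type u)
    [AddCommGroup K] [Module R K] [AddCommGroup F] [Module R F] [AddCommGroup T] [Module R T]
    [AddCommGroup Y] [Module R Y] [Module.Flat R F]
    (j : K →ₗ[R] F) (p : F →ₗ[R] T) (hj : Function.Injective j) (hp : Function.Surjective p)
    (hjp : Function.Exact j p) :
    Nonempty ((((Tor (ModuleCat.{u} R) 1).obj (ModuleCat.of R T)).obj (ModuleCat.of R Y)) ≃ₗ[R]
      LinearMap.ker (j.rTensor Y)) := by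
  obtain ⟨P2, P1, P0, d2, d1, ε, hP, h21, h10, hε, π, hπ, hπk⟩ := tor_res R T Y
  let i := (LinearMap.range d1).subtype
  let q := d1.rangeRestrict
  have hq : Function.Surjective q := LinearMap.surjective_rangeRestrict d1
  have hiq : i ∘ₗ q = d1 := rfl
  have hiε : Function.Exact i ε := by
    intro x
    rw [h10 x]
    simp [i]
  have hdq : Function.Exact d2 q := by
    intro x
    rw [← h21 x]
    exact Subtype.ext_iff
  obtain ⟨e⟩ := snake_iso j p hj hp hjp i ε Subtype.val_injective hε hiε
  have hTq := LinearMap.lTensor_surjective T hq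
  have hTe := lTensor_exact T hdq hq
  have hcomp : ∀ x, i.lTensor T (q.lTensor T x) = d1.lTensor T x := fun x => by
    rw [← LinearMap.comp_apply, ← LinearMap.lTensor_comp, hiq]
  let g : LinearMap.ker (d1.lTensor T) →ₗ[R] LinearMap.ker (i.lTensor T) :=
    LinearMap.codRestrict _ (q.lTensor T ∘ₗ (LinearMap.ker (d1.lTensor T)).subtype)
      (fun x => by
        rw [LinearMap.mem_ker]
        exact (hcomp _).trans x.2)
  have hg : Function.Surjective g := by
    intro y
    obtain ⟨x, hx⟩ := hTq y.1
    refine ⟨⟨x, ?_⟩, Subtype.ext hx⟩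
    rw [LinearMap.mem_ker, ← hcomp, hx]
    exact y.2
  obtain ⟨e'⟩ := equiv_of_ker π hπ g hg (fun x => by
    rw [hπk]
    exact (hTe x.1).symm.trans (Subtype.ext_iff (a1 := g x) (a2 := 0)).symm)
  exact ⟨e' ≪≫ₗ e.symm⟩

lemma ext_pres {R : Type u} [CommRing R] {K F T : Type u} (M : Type u)
    [AddCommGroup K] [Module R K] [AddCommGroup F] [Module R F] [AddCommGroup T] [Module R T]
    [AddCommGroup M] [Module R M] [Module.Projective R F]
    (j : K →ₗ[R] F) (p : F →ₗ[R] T) (hj : Function.Injective j) (hp : Function.Surjective p)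
    (hjp : Function.Exact j p) :
    ∃ ρ : (K →ₗ[R] M) →ₗ[R] (((Ext R (ModuleCat.{u} R) 1).obj
        (Opposite.op (ModuleCat.of R T))).obj (ModuleCat.of R M)),
      Function.Surjective ρ ∧ ∀ f, ρ f = 0 ↔ ∃ k : F →ₗ[R] M, k ∘ₗ j = f := by
  obtain ⟨P2, P1, P0, d2, d1, ε, hP, h21, h10, hε, π, hπ, hπk⟩ := ext_res R T M
  obtain ⟨α, hα⟩ := Module.projective_lifting_property p ε hp
  obtain ⟨β, hβ⟩ := Module.projective_lifting_property ε p hε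
  replace hα : ∀ x, p (α x) = ε x := fun x => LinearMap.congr_fun hα x
  replace hβ : ∀ x, ε (β x) = p x := fun x => LinearMap.congr_fun hβ x
  -- lifting through an injection
  have key : ∀ {A : Type u} [AddCommGroup A] [Module R A] (u : A →ₗ[R] F),
      (∀ x, p (u x) = 0) → ∃ v : A →ₗ[R] K, ∀ x, j (v x) = u x := by
    intro A _ _ u hu
    let e := LinearEquiv.ofInjective j hj
    refine ⟨e.symm.toLinearMap ∘ₗ u.codRestrict (LinearMap.range j)
      (fun x => (hjp _).mp (hu x)), fun x => ?_⟩
    exact congrArg Subtype.val (e.apply_symm_apply ⟨u x, (hjp _).mp (hu x)⟩)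
  let q := d1.rangeRestrict
  have hq : Function.Surjective q := LinearMap.surjective_rangeRestrict d1
  obtain ⟨a, ha⟩ := key (α ∘ₗ d1) (fun x => by
    simp [hα, h10.apply_apply_eq_zero])
  obtain ⟨h', hh'⟩ := key (LinearMap.id - α ∘ₗ β) (fun x => by simp [hα, hβ])
  let b : K →ₗ[R] LinearMap.range d1 := (β ∘ₗ j).codRestrict _ (fun x => (h10 _).mp (by
    simp [hβ, hjp.apply_apply_eq_zero]))
  let h : P0 →ₗ[R] LinearMap.range d1 := (LinearMap.id - β ∘ₗ α).codRestrict _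
    (fun x => (h10 _).mp (by simp [hα, hβ]))
  have had : ∀ x, a (d2 x) = 0 := fun x => hj (by
    rw [ha, map_zero]; simp [h21.apply_apply_eq_zero])
  let ρ0 : (K →ₗ[R] M) →ₗ[R] LinearMap.ker (LinearMap.lcomp R M d2) :=
    LinearMap.codRestrict _ (LinearMap.lcomp R M a) (fun f => by
      rw [LinearMap.mem_ker]
      refine LinearMap.ext fun x => ?_
      simp [had])
  refine ⟨π ∘ₗ ρ0, ?_, ?_⟩
  · intro y
    obtain ⟨g, rfl⟩ := hπ y
    obtain ⟨g', hg'⟩ := factor_surj q hq g.1 (by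
      intro x hx
      obtain ⟨z, rfl⟩ := (h21 x).mp (congrArg Subtype.val hx)
      exact LinearMap.congr_fun g.2 z)
    refine ⟨g' ∘ₗ b, ?_⟩
    rw [← sub_eq_zero, LinearMap.comp_apply, ← map_sub, hπk]
    refine ⟨-(g' ∘ₗ h), LinearMap.ext fun x => ?_⟩
    have e1 : b (a x) = q x - h (d1 x) := Subtype.ext (by
      show β (j (a x)) = d1 x - (d1 x - β (α (d1 x)))
      rw [ha, sub_sub_cancel]; rfl)
    have e2 : g.1 x = g' (q x) := (LinearMap.congr_fun hg' x).symm
    show -(g' (h (d1 x))) = g' (b (a x)) - g.1 x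
    rw [e1, e2, map_sub]; abel
  · intro f
    rw [LinearMap.comp_apply, hπk]
    constructor
    · rintro ⟨k, hk⟩
      replace hk : ∀ x, k (d1 x) = f (a x) := fun x => LinearMap.congr_fun hk x
      refine ⟨k ∘ₗ β + f ∘ₗ h', LinearMap.ext fun x => ?_⟩
      obtain ⟨y, hy⟩ := (b x).2
      replace hy : d1 y = β (j x) := hy
      have e1 : h' (j x) = x - a y := hj (by
        rw [hh', map_sub, ha]
        simp [hy])
      show k (β (j x)) + f (h' (j x)) = f x
      rw [← hy, hk, e1, map_sub]; abel
    · rintro ⟨k, rfl⟩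
      refine ⟨k ∘ₗ α, LinearMap.ext fun x => ?_⟩
      show k (α (d1 x)) = k (j (a x))
      rw [ha]; rfl

/-- Let `R` be a nonnil-coherent φ-ring, `M` a module, `T` a finitely
presented φ-torsion module and `E` an injective module. Then
`Tor₁ᴿ(T, Hom_R(M,E)) ≅ Hom_R(Ext¹ᴿ(T,M), E)` as abelian groups. -/
theorem tor_hom_iso_hom_ext (R : Type u) [CommRing R] (hR : IsPhiRing R)
    (hcoh : IsNonnilCoherent R)
    (M : Type u) [AddCommGroup M] [Module R M]
    (T : Type u) [AddCommGroup T] [Module R T]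
    (hT : Module.FinitePresentation R T) (htor : IsPhiTorsion R T)
    (E : Type u) [AddCommGroup E] [Module R E] (hE : Module.Injective R E) :
    Nonempty
      ((((Tor (ModuleCat.{u} R) 1).obj (ModuleCat.of R T)).obj
          (ModuleCat.of R (M →ₗ[R] E))) ≃+
        ((((Ext R (ModuleCat.{u} R) 1).obj (Opposite.op (ModuleCat.of R T))).obj
            (ModuleCat.of R M)) →ₗ[R] E)) := by
  obtain ⟨n, K, e, hK⟩ := Module.FinitePresentation.exists_fin R T
  have hKfp : Module.FinitePresentation R K := by
    refine fp_aux R hcoh n K hK (fun v => ?_)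
    obtain ⟨I, hI, hann⟩ := htor (e.symm (K.mkQ v))
    obtain ⟨a, haI, ha⟩ := Set.not_subset.mp hI
    refine ⟨a, ha, ?_⟩
    have h := hann a haI
    rw [← map_smul, ← map_smul, LinearEquiv.map_eq_zero_iff] at h
    exact (Submodule.Quotient.mk_eq_zero _).mp h
  let p : (Fin n → R) →ₗ[R] T := e.symm.toLinearMap ∘ₗ K.mkQ
  have hp : Function.Surjective p := e.symm.surjective.comp (Submodule.mkQ_surjective _)
  have hjp : Function.Exact K.subtype p := by
    intro x
    simp [p]
  obtain ⟨e1⟩ := tor_pres (M →ₗ[R] E) K.subtype p Subtype.val_injective hp hjp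
  obtain ⟨ρ, hρ, hρk⟩ := ext_pres M K.subtype p Subtype.val_injective hp hjp
  have hKb := thetaMap_fp R K M E hE
  have hFb := thetaMap_free R n M E
  have nat := fun x => LinearMap.congr_fun (thetaMap_nat M E K.subtype) x
  simp only [LinearMap.comp_apply] at nat
  let W := LinearMap.ker (LinearMap.lcomp R E (LinearMap.lcomp R M K.subtype))
  let t : LinearMap.ker (K.subtype.rTensor (M →ₗ[R] E)) →ₗ[R] W :=
    LinearMap.codRestrict _ (thetaMap R K M E ∘ₗ (LinearMap.ker _).subtype) (fun x => by
      rw [LinearMap.mem_ker]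
      exact (nat x.1).trans (by rw [x.2, map_zero]))
  have ht : Function.Bijective t := by
    constructor
    · intro x y hxy
      exact Subtype.ext (hKb.1 (congrArg Subtype.val hxy))
    · intro w
      obtain ⟨x, hx⟩ := hKb.2 w.1
      refine ⟨⟨x, ?_⟩, Subtype.ext hx⟩
      rw [LinearMap.mem_ker]
      apply hFb.1
      rw [← nat, hx, map_zero]
      exact w.2
  let s : ((((Ext R (ModuleCat.{u} R) 1).obj (Opposite.op (ModuleCat.of R T))).obj
            (ModuleCat.of R M)) →ₗ[R] E) →ₗ[R] W :=
    LinearMap.codRestrict _ (LinearMap.lcomp R E ρ) (fun ψ => by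
      rw [LinearMap.mem_ker]
      refine LinearMap.ext fun k => ?_
      show ψ (ρ (k ∘ₗ K.subtype)) = 0
      rw [(hρk _).mpr ⟨k, rfl⟩, map_zero])
  have hs : Function.Bijective s := by
    constructor
    · intro x y hxy
      refine LinearMap.ext fun z => ?_
      obtain ⟨z, rfl⟩ := hρ z
      exact LinearMap.congr_fun (congrArg Subtype.val hxy) z
    · intro w
      obtain ⟨ψ, hψ⟩ := factor_surj ρ hρ w.1 (by
        intro f hf
        obtain ⟨k, rfl⟩ := (hρk f).mp hf
        exact LinearMap.congr_fun w.2 k)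
      exact ⟨ψ, Subtype.ext hψ⟩
  exact ⟨(e1 ≪≫ₗ LinearEquiv.ofBijective t ht ≪≫ₗ
    (LinearEquiv.ofBijective s hs).symm).toAddEquiv⟩
end
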